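/- The section at the level-three vertex 111 of the normal closure K of (ab)² in the first Grigorchuk group contains all of Γ: for every g ∈ Γ there exists h ∈ K such that h (true :: true :: true :: w) = true :: true :: true :: g w for all w : List Bool. -/

import Mathlib

namespace Grigorchuk

/-- Underlying map of the Grigorchuk generator `a`: flip the first letter. -/
def aF : List Bool → List Bool
  | [] => []
  | x :: w => (!x) :: w

mutual
  /-- Underlying map of the Grigorchuk generator `b`. -/
  def bF : List Bool → List Bool
    | [] => []
    | false :: w => false :: aF w
    | true :: w => true :: cF w
  /-- Underlying map of the Grigorchuk generator `c`. -/
  def cF : List Bool → List Bool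
    | [] => []
    | false :: w => false :: aF w
    | true :: w => true :: dF w
  /-- Underlying map of the Grigorchuk generator `d`. -/
  def dF : List Bool → List Bool
    | [] => []
    | false :: w => false :: w
    | true :: w => true :: bF w
end

theorem aF_aF : ∀ w : List Bool, aF (aF w) = w := by
  intro w
  cases w with
  | nil => rfl
  | cons x w => simp [aF]

theorem bcd_invol : ∀ w : List Bool,
    bF (bF w) = w ∧ cF (cF w) = w ∧ dF (dF w) = w := by
  intro w
  induction w with
  | nil => simp [bF, cF, dF]
  | cons x w ih =>
    cases x <;> simp [bF, cF, dF, aF_aF, ih.1, ih.2.1, ih.2.2]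

/-- The Grigorchuk generator `a` as a permutation of `List Bool`. -/
def a : Equiv.Perm (List Bool) := ⟨aF, aF, aF_aF, aF_aF⟩

/-- The Grigorchuk generator `b` as a permutation of `List Bool`. -/
def b : Equiv.Perm (List Bool) :=
  ⟨bF, bF, fun w => (bcd_invol w).1, fun w => (bcd_invol w).1⟩

/-- The Grigorchuk generator `c` as a permutation of `List Bool`. -/
def c : Equiv.Perm (List Bool) :=
  ⟨cF, cF, fun w => (bcd_invol w).2.1, fun w => (bcd_invol w).2.1⟩

/-- The Grigorchuk generator `d` as a permutation of `List Bool`. -/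
def d : Equiv.Perm (List Bool) :=
  ⟨dF, dF, fun w => (bcd_invol w).2.2, fun w => (bcd_invol w).2.2⟩

/-- Underlying map of the pair `(g, h)` acting on the two subtrees. -/
def pairF (g h : List Bool → List Bool) : List Bool → List Bool
  | [] => []
  | false :: w => false :: g w
  | true :: w => true :: h w

/-- The permutation of `List Bool` acting as `g` on the subtree below `false`
and as `h` on the subtree below `true`, fixing the root. -/
def pair (g h : Equiv.Perm (List Bool)) : Equiv.Perm (List Bool) :=
  ⟨pairF g h, pairF g.symm h.symm,
    fun w => by cases w with
      | nil => rfl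
      | cons x w => cases x <;> simp [pairF],
    fun w => by cases w with
      | nil => rfl
      | cons x w => cases x <;> simp [pairF]⟩

/-- The first Grigorchuk group: the subgroup of `Equiv.Perm (List Bool)`
generated by `a`, `b`, `c`, `d`. -/
def Γ : Subgroup (Equiv.Perm (List Bool)) := Subgroup.closure {a, b, c, d}

/-- The normal closure in `Γ` of the element `(a * b)^2`, realized as the subgroup
of `Equiv.Perm (List Bool)` generated by all `Γ`-conjugates of `(a * b)^2`. -/
def K : Subgroup (Equiv.Perm (List Bool)) :=
  Subgroup.closure {g | ∃ x ∈ Γ, g = x * (a * b) ^ 2 * x⁻¹}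

end Grigorchuk

/-!
Call `g` the section of `h` at a vertex `v` if `h (v ++ w) = v ++ g w` for all `w`, and write `N₁`
for the group of all sections at the vertex `1 = [true]` of elements of a permutation group `N`.
Every element of `Γ` is a section at `1` of an element of `Γ`, so if `Γ` normalizes `N`, then it
also normalizes `N₁`. Sections compose along words, so it suffices to apply `N ↦ N₁` three times to
`K` and to find generators of `Γ` in the result.

Write `(g, h)` for `pair g h`; then `b = (a, c)`, `c = (a, d)`, `d = (1, b)`, while conjugation by
`a` swaps the two entries, so that `(a * (g, h))²` has section `g * h` at `1`. Hence:

* `(ab)² ∈ K` gives `ac ∈ K₁`;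
* `(ac)² ∈ K₁` gives `ad ∈ K₁₁`, and the commutator `(ac)(d(ac)d⁻¹)⁻¹ = (ad)² ∈ K₁` gives
  `b ∈ K₁₁`;
* `(ad)²`, `b` and `aba` lie in `K₁₁` and give `b`, `c` and `a` in `K₁₁₁`, and `d = bc`.
-/

section Sections

open Equiv Subgroup

variable {α : Type*}

/-- `g` is the section of `h` at the vertex `v` of the rooted tree of words over `α`, that is, the
permutation by which `h` acts on the words below `v`. This requires `h` to preserve that set of
words; sections at vertices which `h` moves are not considered. -/
def IsSectionAt (v : List α) (h g : Perm (List α)) : Prop :=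
  ∀ w, h (v ++ w) = v ++ g w

namespace IsSectionAt

variable {u v : List α} {f g h f' g' : Perm (List α)}

theorem one (v : List α) : IsSectionAt v 1 1 := fun _ => rfl

theorem mul (hf : IsSectionAt v f g) (hf' : IsSectionAt v f' g') :
    IsSectionAt v (f * f') (g * g') := fun w => by
  rw [Perm.mul_apply, hf', hf, Perm.mul_apply]

theorem inv (hf : IsSectionAt v f g) : IsSectionAt v f⁻¹ g⁻¹ := fun w => by
  rw [Perm.inv_eq_iff_eq, hf, ← Perm.mul_apply, mul_inv_cancel, Perm.one_apply]

theorem append (hf : IsSectionAt u f g) (hg : IsSectionAt v g h) :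
    IsSectionAt (u ++ v) f h := fun w => by
  rw [List.append_assoc, hf, hg, List.append_assoc]

end IsSectionAt

/-- The group of all sections at the vertex `v` of elements of `N`; for a group `N` of tree
automorphisms this is the image in `Perm (List α)` of the stabilizer of `v` in `N`. -/
def sectionsAt (v : List α) (N : Subgroup (Perm (List α))) : Subgroup (Perm (List α)) where
  carrier := {g | ∃ h ∈ N, IsSectionAt v h g}
  one_mem' := ⟨1, one_mem N, .one v⟩
  mul_mem' := by
    rintro _ _ ⟨h, hN, hg⟩ ⟨h', hN', hg'⟩
    exact ⟨h * h', mul_mem hN hN', hg.mul hg'⟩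
  inv_mem' := by
    rintro _ ⟨h, hN, hg⟩
    exact ⟨h⁻¹, inv_mem hN, hg.inv⟩

theorem le_normalizer_sectionsAt {v : List α} {G H N : Subgroup (Perm (List α))}
    (hG : G ≤ sectionsAt v H) (hH : H ≤ normalizer N) : G ≤ normalizer (sectionsAt v N) := by
  refine le_normalizer_iff.2 ?_
  rintro x hx g ⟨h, hN, hg⟩
  obtain ⟨y, hy, hyx⟩ := hG hx
  exact ⟨y * h * y⁻¹, le_normalizer_iff.1 hH y hy h hN, (hyx.mul hg).mul hyx.inv⟩

end Sections

namespace Grigorchuk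

open Equiv Subgroup

section Pair

variable (g h g' h' : Perm (List Bool))

theorem isSectionAt_pair : IsSectionAt [true] (pair g h) h := fun _ => rfl

theorem pair_mul_pair : pair g h * pair g' h' = pair (g * g') (h * h') := by
  ext1 w
  rcases w with _ | ⟨_ | _, w⟩ <;> rfl

theorem a_mul_pair_mul_a : a * pair g h * a = pair h g := by
  ext1 w
  rcases w with _ | ⟨_ | _, w⟩ <;> rfl

theorem a_mul_pair_sq : (a * pair g h) ^ 2 = pair (h * g) (g * h) := by
  rw [pow_two, ← mul_assoc, a_mul_pair_mul_a, pair_mul_pair]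

end Pair

theorem b_eq_pair : b = pair a c := by
  ext1 w
  rcases w with _ | ⟨_ | _, w⟩ <;> simp [a, b, c, bF, pair, pairF]

theorem c_eq_pair : c = pair a d := by
  ext1 w
  rcases w with _ | ⟨_ | _, w⟩ <;> simp [a, c, d, cF, pair, pairF]

theorem d_eq_pair : d = pair 1 b := by
  ext1 w
  rcases w with _ | ⟨_ | _, w⟩ <;> simp [b, d, dF, pair, pairF]

theorem a_inv : a⁻¹ = a := rfl

theorem c_inv : c⁻¹ = c := rfl

theorem d_inv : d⁻¹ = d := rfl

-- The three identities are proved together, as the recursion for `b`, `c`, `d` permutes them.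
theorem bcd_comp (w : List Bool) :
    bF (cF w) = dF w ∧ cF (dF w) = bF w ∧ dF (bF w) = cF w := by
  induction w with
  | nil => simp [bF, cF, dF]
  | cons x w ih => cases x <;> simp [bF, cF, dF, aF_aF, ih]

theorem b_mul_c : b * c = d := Equiv.ext fun w => (bcd_comp w).1

theorem c_mul_d : c * d = b := Equiv.ext fun w => (bcd_comp w).2.1

theorem a_mem_Γ : a ∈ Γ := subset_closure (by simp)

theorem b_mem_Γ : b ∈ Γ := subset_closure (by simp)

theorem c_mem_Γ : c ∈ Γ := subset_closure (by simp)

theorem d_mem_Γ : d ∈ Γ := subset_closure (by simp)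

theorem Γ_le_of_mem {H : Subgroup (Perm (List Bool))} (ha : a ∈ H) (hb : b ∈ H) (hc : c ∈ H) :
    Γ ≤ H := by
  refine (closure_le H).2 ?_
  rintro _ (rfl | rfl | rfl | rfl)
  exacts [ha, hb, hc, b_mul_c ▸ mul_mem hb hc]

section SectionsAtOne

variable {N : Subgroup (Perm (List Bool))} {g h : Perm (List Bool)}

theorem mem_sectionsAt_of_pair_mem (hN : pair g h ∈ N) : h ∈ sectionsAt [true] N :=
  ⟨pair g h, hN, isSectionAt_pair g h⟩

theorem mul_mem_sectionsAt_of_sq_mem (hN : (a * pair g h) ^ 2 ∈ N) :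
    g * h ∈ sectionsAt [true] N :=
  mem_sectionsAt_of_pair_mem (a_mul_pair_sq g h ▸ hN)

theorem a_mul_c_mem_sectionsAt (hab : (a * b) ^ 2 ∈ N) : a * c ∈ sectionsAt [true] N :=
  mul_mem_sectionsAt_of_sq_mem (b_eq_pair ▸ hab)

theorem a_mul_d_mem_sectionsAt (hac : (a * c) ^ 2 ∈ N) : a * d ∈ sectionsAt [true] N :=
  mul_mem_sectionsAt_of_sq_mem (c_eq_pair ▸ hac)

theorem b_mem_sectionsAt (had : (a * d) ^ 2 ∈ N) : b ∈ sectionsAt [true] N :=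
  one_mul b ▸ mul_mem_sectionsAt_of_sq_mem (d_eq_pair ▸ had)

theorem c_mem_sectionsAt (hb : b ∈ N) : c ∈ sectionsAt [true] N :=
  mem_sectionsAt_of_pair_mem (b_eq_pair ▸ hb)

theorem a_mem_sectionsAt (haba : a * b * a ∈ N) : a ∈ sectionsAt [true] N :=
  mem_sectionsAt_of_pair_mem (g := c) (by rwa [← a_mul_pair_mul_a, ← b_eq_pair])

end SectionsAtOne

theorem Γ_le_sectionsAt_Γ : Γ ≤ sectionsAt [true] Γ :=
  Γ_le_of_mem
    (a_mem_sectionsAt (mul_mem (mul_mem a_mem_Γ b_mem_Γ) a_mem_Γ))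
    (b_mem_sectionsAt (pow_mem (mul_mem a_mem_Γ d_mem_Γ) 2))
    (c_mem_sectionsAt b_mem_Γ)

theorem a_mul_b_sq_mem_K : (a * b) ^ 2 ∈ K :=
  subset_closure ⟨1, one_mem Γ, by group⟩

theorem Γ_le_normalizer_K : Γ ≤ normalizer K := by
  refine le_normalizer_closure_iff.2 ?_
  rintro x hx _ ⟨y, hy, rfl⟩
  exact subset_closure ⟨x * y, mul_mem hx hy, by group⟩

section Normalized

variable {N : Subgroup (Perm (List Bool))}

theorem a_mul_d_sq_mem (hN : Γ ≤ normalizer N) (hac : a * c ∈ N) : (a * d) ^ 2 ∈ N := by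
  have c_conj_d : c * d * c⁻¹ = d := by rw [c_mul_d, c_inv, b_mul_c]
  have commutator_eq : a * c * (d * (a * c) * d⁻¹)⁻¹ = (a * d) ^ 2 := calc
    a * c * (d * (a * c) * d⁻¹)⁻¹ = a * (c * d * c⁻¹) * a⁻¹ * d⁻¹ := by group
    _ = a * d * a * d := by rw [c_conj_d, a_inv, d_inv]
    _ = (a * d) ^ 2 := by rw [pow_two, mul_assoc (a * d)]
  exact commutator_eq ▸ mul_mem hac (inv_mem (le_normalizer_iff.1 hN d d_mem_Γ _ hac))

theorem Γ_le_sectionsAt (hN : Γ ≤ normalizer N) (hb : b ∈ N) (had : a * d ∈ N) :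
    Γ ≤ sectionsAt [true] N :=
  have haba : a * b * a ∈ N := le_normalizer_iff.1 hN a a_mem_Γ b hb
  Γ_le_of_mem (a_mem_sectionsAt haba) (b_mem_sectionsAt (pow_mem had 2)) (c_mem_sectionsAt hb)

end Normalized

end Grigorchuk

open Grigorchuk in
/-- The section at the level-three vertex `111` of the normal closure `K` of `(ab)²`
in the first Grigorchuk group contains all of `Γ`. -/
theorem grigorchuk_K_section (g : Equiv.Perm (List Bool)) (hg : g ∈ Γ) :
    ∃ h ∈ K, ∀ w : List Bool,
      h (true :: true :: true :: w) = true :: true :: true :: g w := by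
  have normalized₁ : Γ ≤ Subgroup.normalizer (sectionsAt [true] K) :=
    le_normalizer_sectionsAt Γ_le_sectionsAt_Γ Γ_le_normalizer_K
  have normalized₂ : Γ ≤ Subgroup.normalizer (sectionsAt [true] (sectionsAt [true] K)) :=
    le_normalizer_sectionsAt Γ_le_sectionsAt_Γ normalized₁
  have hac : a * c ∈ sectionsAt [true] K := a_mul_c_mem_sectionsAt a_mul_b_sq_mem_K
  have had : a * d ∈ sectionsAt [true] (sectionsAt [true] K) :=
    a_mul_d_mem_sectionsAt (pow_mem hac 2)
  have hb : b ∈ sectionsAt [true] (sectionsAt [true] K) :=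
    b_mem_sectionsAt (a_mul_d_sq_mem normalized₁ hac)
  obtain ⟨h₂, ⟨h₁, ⟨h, hK, hh₁⟩, h₁h₂⟩, h₂g⟩ := Γ_le_sectionsAt normalized₂ hb had hg
  exact ⟨h, hK, (hh₁.append h₁h₂).append h₂g⟩
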